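/- arXiv:2112.07506 — 2 statements merged into one kernel-verified Lean document; each statement's English description precedes it below -/
import Mathlib

section
/- A partition p (of an upper row of k points and a lower row of k points) is projective, i.e. satisfies p² = p and p* = p (where composition is vertical concatenation with loops removed and * is vertical reflection), if and only if there exists a partition r ∈ P(k, l) for some l such that p = r*r. -/
attribute [local instance] Classical.propDecidable

namespace Partitions

/-- A partition with upper row indexed by `α` and lower row indexed by `β`,
modeled as an equivalence relation (set partition) on the disjoint union. -/
abbrev Partn (α β : Type) := Setoid (α ⊕ β)

variable {α β γ α' β' : Type}

/-- Reflection across the horizontal axis: swap upper and lower rows. -/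
def reflP (p : Partn α β) : Partn β α := Setoid.comap Sum.swap p

/-- Inclusion of the two-row diagram of the top partition into the three-row diagram. -/
def iTop : α ⊕ β → α ⊕ β ⊕ γ := Sum.map id Sum.inl

/-- Inclusion of the two-row diagram of the bottom partition into the three-row diagram. -/
def iBot (α : Type) {β γ : Type} : β ⊕ γ → α ⊕ β ⊕ γ := Sum.inr

/-- Inclusion of the outer (top and bottom) rows into the three-row diagram. -/
def iOut : α ⊕ γ → α ⊕ β ⊕ γ := Sum.map id Sum.inr

/-- Inclusion of the middle row into the three-row diagram. -/
def iMid (α : Type) {β : Type} (γ : Type) (b : β) : α ⊕ β ⊕ γ := Sum.inr (Sum.inl b)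

/-- The equivalence relation generated on the three-row diagram when stacking
`p` (with rows `α`, `β`) on top of `q` (with rows `β`, `γ`). -/
def glue (q : Partn β γ) (p : Partn α β) : Setoid (α ⊕ β ⊕ γ) :=
  Relation.EqvGen.setoid (fun x y =>
    (∃ u v, p.r u v ∧ x = iTop u ∧ y = iTop v) ∨
    (∃ u v, q.r u v ∧ x = iBot α u ∧ y = iBot α v))

/-- Vertical concatenation: `p` on top, `q` below; restrict the glued relation to
the outer rows. -/
def vcomp (q : Partn β γ) (p : Partn α β) : Partn α γ :=
  Setoid.comap iOut (glue q p)

/-- A projective partition: `p² = p = p*`. -/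
def Projective (p : Partn α α) : Prop := vcomp p p = p ∧ reflP p = p

/-- A middle point lying on a removed loop: it is connected to no outer point. -/
def IsLoopPt (q : Partn β γ) (p : Partn α β) (b : β) : Prop :=
  ∀ x : α ⊕ γ, ¬ (glue q p).r (iMid α γ b) (iOut x)

/-- The number of removed loops `rl(q, p)` in the vertical concatenation. -/
noncomputable def rl (q : Partn β γ) (p : Partn α β) : ℕ :=
  Nat.card (Quotient (Setoid.comap
    (fun b : {b : β // IsLoopPt q p b} => iMid α γ b.1) (glue q p)))

/-- The disjoint union of two set partitions. -/
def sumSetoid (p : Setoid α) (q : Setoid β) : Setoid (α ⊕ β) :=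
  ⟨Sum.LiftRel p.r q.r, by
    refine ⟨?_, ?_, ?_⟩
    · rintro (a | b)
      · exact .inl (p.iseqv.refl a)
      · exact .inr (q.iseqv.refl b)
    · rintro _ _ (h | h)
      · exact .inl (p.iseqv.symm h)
      · exact .inr (q.iseqv.symm h)
    · rintro _ _ _ (h | h) h₂
      · cases h₂ with
        | inl h₂ => exact .inl (p.iseqv.trans h h₂)
      · cases h₂ with
        | inr h₂ => exact .inr (q.iseqv.trans h h₂)⟩

/-- Horizontal concatenation `p ⊙ q` of partitions. -/
def hconcat (p : Partn α β) (q : Partn α' β') : Partn (α ⊕ α') (β ⊕ β') :=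
  Setoid.comap (Equiv.sumSumSumComm α α' β β') (sumSetoid p q)

/-- Number of through-blocks `t(p)`: blocks containing both an upper and a lower point. -/
noncomputable def throughCount (p : Partn α β) : ℕ :=
  Nat.card {c : Quotient p //
    (∃ a : α, Quotient.mk p (Sum.inl a) = c) ∧ ∃ b : β, Quotient.mk p (Sum.inr b) = c}

/-- `δ_p(i, j)`: `1` if the indices are constant on each block of `p`, `0` otherwise. -/
noncomputable def deltaP (N : ℕ) (p : Partn α β) (f : α → Fin N) (g : β → Fin N) : ℂ :=
  if ∀ x y, p.r x y → Sum.elim f g x = Sum.elim f g y then 1 else 0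

/-- The matrix of the linear map `T_p : (ℂ^N)^{⊗α} → (ℂ^N)^{⊗β}` in the canonical bases. -/
noncomputable def partMatrix (N : ℕ) (p : Partn α β) :
    Matrix (β → Fin N) (α → Fin N) ℂ :=
  fun g f => deltaP N p f g

/-- The identity partition `|` in `P(1,1)` (one block joining the two points). -/
def identP : Partn (Fin 1) (Fin 1) := ⊤

/-!
A through-block of `r* r` arises by joining an upper block of `r` to its mirror image along a common
middle block, so it contains the mirror image of each of its points. For a reflection-symmetric `p`
with this mirror property, stacking two copies of `p` reproduces `p`: the two copies of a
through-block meet in the middle row, and the remaining middle points reach no outer point.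
Conversely, a projective `p` is `p* p`.
-/

section Glue

variable {q : Partn β γ} {p : Partn α β}

theorem glue_le_iff {S : Setoid (α ⊕ β ⊕ γ)} :
    glue q p ≤ S ↔ p ≤ S.comap iTop ∧ q ≤ S.comap (iBot α) := by
  constructor
  · intro h
    exact ⟨fun u v huv => h (.rel _ _ (.inl ⟨u, v, huv, rfl, rfl⟩)),
      fun u v huv => h (.rel _ _ (.inr ⟨u, v, huv, rfl, rfl⟩))⟩
  · rintro ⟨hp, hq⟩
    apply Setoid.eqvGen_le
    rintro _ _ (⟨u, v, huv, rfl, rfl⟩ | ⟨u, v, huv, rfl, rfl⟩)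
    exacts [hp huv, hq huv]

theorem le_comap_iTop_glue : p ≤ (glue q p).comap iTop := (glue_le_iff.mp le_rfl).1

theorem le_comap_iBot_glue : q ≤ (glue q p).comap (iBot α) := (glue_le_iff.mp le_rfl).2

theorem iff_of_glue {P : α ⊕ β ⊕ γ → Prop}
    (hp : ∀ u v, p u v → P (iTop u) → P (iTop v))
    (hq : ∀ u v, q u v → P (iBot α u) → P (iBot α v))
    {x y : α ⊕ β ⊕ γ} (h : glue q p x y) : P x ↔ P y := by
  have hle : glue q p ≤ Setoid.ker P := glue_le_iff.mpr
    ⟨fun u v huv => propext ⟨hp u v huv, hp v u (p.symm huv)⟩,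
      fun u v huv => propext ⟨hq u v huv, hq v u (q.symm huv)⟩⟩
  exact Iff.of_eq (hle h)

end Glue

section Vcomp

variable {q : Partn β γ} {p : Partn α β}

theorem vcomp_inl_inl {a a' : α} (h : p (.inl a) (.inl a')) :
    vcomp q p (.inl a) (.inl a') :=
  le_comap_iTop_glue h

theorem vcomp_inr_inr {c c' : γ} (h : q (.inr c) (.inr c')) :
    vcomp q p (.inr c) (.inr c') :=
  le_comap_iBot_glue h

theorem vcomp_inl_inr {a : α} {b : β} {c : γ} (hp : p (.inl a) (.inr b))
    (hq : q (.inl b) (.inr c)) : vcomp q p (.inl a) (.inr c) :=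
  (glue q p).trans (le_comap_iTop_glue hp) (le_comap_iBot_glue hq)

theorem exists_inl_inr_of_vcomp {a : α} {c : γ} (h : vcomp q p (.inl a) (.inr c)) :
    ∃ b, p (.inl a) (.inr b) := by
  by_contra! hab
  -- An upper block of `p` with no lower points stays a block of its own in the glued diagram.
  let P : α ⊕ β ⊕ γ → Prop := Sum.elim (fun a' => p (.inl a) (.inl a')) fun _ => False
  have hp : ∀ u v, p u v → P (iTop u) → P (iTop v)
    | .inl _, .inl _, huv, hu => p.trans hu huv
    | .inl _, .inr b, huv, hu => hab b (p.trans hu huv)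
  exact (iff_of_glue hp (fun _ _ _ => id) h).mp (p.refl _)

end Vcomp

section Reflection

/-- Reflection of the three-row diagram across its middle row; it exchanges the diagrams in which
`glue q p` and `glue (reflP p) (reflP q)` live. -/
def flipRows : α ⊕ β ⊕ γ → γ ⊕ β ⊕ α :=
  Sum.elim (Sum.inr ∘ Sum.inr) (Sum.elim (Sum.inr ∘ Sum.inl) Sum.inl)

theorem reflP_swap_swap {p : Partn α β} {x y : α ⊕ β} : reflP p x.swap y.swap ↔ p x y := by
  rw [reflP, Setoid.comap_rel, Sum.swap_swap, Sum.swap_swap]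

theorem reflP_reflP (p : Partn α β) : reflP (reflP p) = p := by
  ext x y
  exact reflP_swap_swap

theorem glue_le_comap_flipRows (q : Partn β γ) (p : Partn α β) :
    glue q p ≤ (glue (reflP p) (reflP q)).comap flipRows := by
  refine glue_le_iff.mpr ⟨?_, ?_⟩
  · rintro (u | u) (v | v) huv <;> exact le_comap_iBot_glue (reflP_swap_swap.mpr huv)
  · rintro (u | u) (v | v) huv <;> exact le_comap_iTop_glue (reflP_swap_swap.mpr huv)

theorem reflP_vcomp (q : Partn β γ) (p : Partn α β) :
    reflP (vcomp q p) = vcomp (reflP p) (reflP q) := by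
  apply le_antisymm
  · rintro (x | x) (y | y) h <;> exact glue_le_comap_flipRows q p h
  · have hle := glue_le_comap_flipRows (reflP p) (reflP q)
    rw [reflP_reflP, reflP_reflP] at hle
    rintro (x | x) (y | y) h <;> exact hle h

theorem reflP_vcomp_reflP_self (r : Partn α β) :
    reflP (vcomp (reflP r) r) = vcomp (reflP r) r := by
  rw [reflP_vcomp, reflP_reflP]

theorem rel_swap_of_reflP_eq {p : Partn α α} (hrefl : reflP p = p) {x y : α ⊕ α} (h : p x y) :
    p x.swap y.swap := by
  rwa [← hrefl, reflP_swap_swap]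

end Reflection

section Mirror

/-- The mirror property of through-blocks: an upper point connected to the lower row is connected
to its own mirror image. Only upper points are mentioned, since the property is meant for
reflection-symmetric partitions. -/
def HasMirroredThroughBlocks (p : Partn α α) : Prop :=
  ∀ ⦃a a' : α⦄, p (.inl a) (.inr a') → p (.inl a) (.inr a)

theorem hasMirroredThroughBlocks_vcomp_reflP_self (r : Partn α β) :
    HasMirroredThroughBlocks (vcomp (reflP r) r) := by
  intro a a' h
  obtain ⟨b, hb⟩ := exists_inl_inr_of_vcomp h
  exact vcomp_inl_inr hb (r.symm hb)

variable {p : Partn α α}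

theorem HasMirroredThroughBlocks.inl_inl (hmirror : HasMirroredThroughBlocks p)
    (hrefl : reflP p = p) {a b : α} (h : p (.inl a) (.inr b)) : p (.inl a) (.inl b) := by
  have hba : p (.inl b) (.inr a) := p.symm (rel_swap_of_reflP_eq hrefl h)
  exact p.trans h (p.symm (hmirror hba))

theorem HasMirroredThroughBlocks.le_vcomp_self (hmirror : HasMirroredThroughBlocks p) :
    p ≤ vcomp p p := by
  have inl_inr {a b : α} (h : p (.inl a) (.inr b)) : vcomp p p (.inl a) (.inr b) :=
    vcomp_inl_inr (hmirror h) h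
  rintro (a | a) (b | b) h
  · exact vcomp_inl_inl h
  · exact inl_inr h
  · exact (vcomp p p).symm (inl_inr (p.symm h))
  · exact vcomp_inr_inr h

theorem HasMirroredThroughBlocks.vcomp_self_le (hmirror : HasMirroredThroughBlocks p)
    (hrefl : reflP p = p) : vcomp p p ≤ p := by
  intro u v huv
  -- `P` is the part of the three-row diagram reached from the outer point `u`: a middle point
  -- belongs to it when `u` is connected to both of its copies, as a lower and as an upper point.
  let P : α ⊕ α ⊕ α → Prop := Sum.elim (fun a => p u (.inl a))
    (Sum.elim (fun b => p u (.inl b) ∧ p u (.inr b)) fun c => p u (.inr c))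
  have P_iOut : ∀ w, P (iOut w) ↔ p u w
    | .inl _ => Iff.rfl
    | .inr _ => Iff.rfl
  have hswap {x y : α ⊕ α} : p x y → p x.swap y.swap := rel_swap_of_reflP_eq hrefl
  have htop : ∀ x y, p x y → P (iTop x) → P (iTop y)
    | .inl _, .inl _, h, hx => p.trans hx h
    | .inl _, .inr _, h, hx => ⟨p.trans hx (hmirror.inl_inl hrefl h), p.trans hx h⟩
    | .inr _, .inl _, h, hx => p.trans hx.2 h
    | .inr _, .inr _, h, hx => ⟨p.trans hx.1 (hswap h), p.trans hx.2 h⟩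
  have hbot : ∀ x y, p x y → P (iBot α x) → P (iBot α y)
    | .inl _, .inl _, h, hx => ⟨p.trans hx.1 h, p.trans hx.2 (hswap h)⟩
    | .inl _, .inr _, h, hx => p.trans hx.1 h
    | .inr _, .inl _, h, hx =>
      ⟨p.trans hx h, p.trans hx (hswap (hmirror.inl_inl hrefl (hswap h)))⟩
    | .inr _, .inr _, h, hx => p.trans hx h
  exact (P_iOut v).mp ((iff_of_glue htop hbot huv).mp ((P_iOut u).mpr (p.refl u)))

theorem projective_iff_reflP_eq_and_hasMirroredThroughBlocks :
    Projective p ↔ reflP p = p ∧ HasMirroredThroughBlocks p := by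
  constructor
  · rintro ⟨hidem, hrefl⟩
    have hp : vcomp (reflP p) p = p := by rw [hrefl, hidem]
    exact ⟨hrefl, hp ▸ hasMirroredThroughBlocks_vcomp_reflP_self p⟩
  · rintro ⟨hrefl, hmirror⟩
    exact ⟨le_antisymm (hmirror.vcomp_self_le hrefl) hmirror.le_vcomp_self, hrefl⟩

theorem projective_vcomp_reflP_self (r : Partn α β) : Projective (vcomp (reflP r) r) :=
  projective_iff_reflP_eq_and_hasMirroredThroughBlocks.mpr
    ⟨reflP_vcomp_reflP_self r, hasMirroredThroughBlocks_vcomp_reflP_self r⟩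

end Mirror

/-- The rows of `p` and `r` are drawn from a common family of types: `row = Fin` gives the finite
partitions and `row = id` the partitions with arbitrary rows. -/
theorem projective_iff_exists_reflP_vcomp_general {ι : Type*} (row : ι → Type) (i : ι)
    (p : Partn (row i) (row i)) :
    Projective p ↔ ∃ (j : ι) (r : Partn (row i) (row j)), vcomp (reflP r) r = p := by
  constructor
  · rintro ⟨hidem, hrefl⟩
    exact ⟨i, p, by rw [hrefl, hidem]⟩
  · rintro ⟨j, r, rfl⟩
    exact projective_vcomp_reflP_self r

/-- A partition `p ∈ P(k,k)` is projective (`p² = p = p*`) if and only if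
`p = r* r` for some partition `r ∈ P(k, l)`. -/
theorem projective_iff_exists_reflP_vcomp (k : ℕ) (p : Partn (Fin k) (Fin k)) :
    Projective p ↔ ∃ (l : ℕ) (r : Partn (Fin k) (Fin l)), vcomp (reflP r) r = p :=
  projective_iff_exists_reflP_vcomp_general Fin k p

end Partitions
end

section
/- Let π : A → B be a surjective morphism of Hopf *-algebras with S_A² = id, and let (C, ◁, γ) be a B-Yetter-Drinfeld algebra: C is a right B-comodule *-algebra via γ and a right B-module *-algebra via ◁, satisfying γ(c ◁ b) = (c₍₀₎ ◁ b₍₂₎) ⊗ S_B(b₍₁₎) c₍₁₎ b₍₃₎. Define on the induced algebra Ind(C) ⊆ C ⊗ A the operation (c ⊗ a') ◁' a = (c ◁ π(a₍₂₎)) ⊗ S_A(a₍₁₎) a' a₍₃₎. Then ◁' maps Ind(C) ⊗ A into Ind(C), makes Ind(C) a right A-module algebra, and (Ind(C), ◁', id ⊗ Δ_A) satisfies the Yetter-Drinfeld condition over A. Moreover, if (C, ◁, γ) is braided commutative (c c' = c'₍₀₎ (c ◁ c'₍₁₎)), then so is (Ind(C), ◁', id ⊗ Δ_A). -/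
open scoped TensorProduct

noncomputable section

/-- The star operation on `M ⊗[ℂ] N`, `a ⊗ b ↦ star a ⊗ star b` (an additive map,
conjugate-linear over `ℂ`). -/
def starT (M N : Type) [AddCommGroup M] [Module ℂ M] [StarAddMonoid M]
    [StarModule ℂ M] [AddCommGroup N] [Module ℂ N] [StarAddMonoid N] [StarModule ℂ N] :
    M ⊗[ℂ] N →+ M ⊗[ℂ] N :=
  TensorProduct.liftAddHom
    { toFun := fun a =>
        { toFun := fun b => star a ⊗ₜ[ℂ] star b
          map_zero' := by simp
          map_add' := fun x y => by simp [star_add, TensorProduct.tmul_add] }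
      map_zero' := by ext b; simp
      map_add' := fun x y => by ext b; simp [star_add, TensorProduct.add_tmul] }
    (fun c a b => by
      simp only [AddMonoidHom.coe_mk, ZeroHom.coe_mk, star_smul]
      rw [TensorProduct.smul_tmul])

variable (A : Type) [Ring A] [HopfAlgebra ℂ A]
variable (B : Type) [Ring B] [HopfAlgebra ℂ B]
variable (C : Type) [Ring C] [Algebra ℂ C]

/-- The cotensor product `Ind(C) = C □_B A` inside `C ⊗ A`. -/
def IndSub (π : A →ₐ[ℂ] B) (γ : C →ₐ[ℂ] C ⊗[ℂ] B) : Submodule ℂ (C ⊗[ℂ] A) :=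
  LinearMap.eqLocus
    ((TensorProduct.assoc ℂ C B A).toLinearMap ∘ₗ
      TensorProduct.map γ.toLinearMap LinearMap.id)
    (TensorProduct.map LinearMap.id
      (TensorProduct.map π.toLinearMap LinearMap.id ∘ₗ Coalgebra.comul (R := ℂ)))

/-- The rearranged iterated comultiplication `a ↦ a₍₂₎ ⊗ (a₍₁₎ ⊗ a₍₃₎)`. -/
def comulTwo : A →ₗ[ℂ] A ⊗[ℂ] (A ⊗[ℂ] A) :=
  (TensorProduct.leftComm ℂ A A A).toLinearMap ∘ₗ
    TensorProduct.map LinearMap.id (Coalgebra.comul (R := ℂ)) ∘ₗ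
    Coalgebra.comul (R := ℂ)

/-- The induced action on `C ⊗ A`:
`(c ⊗ a') ◁' a = (c ◁ π(a₍₂₎)) ⊗ S_A(a₍₁₎) a' a₍₃₎`. -/
def actInd (π : A →ₐ[ℂ] B) (actC : C →ₗ[ℂ] B →ₗ[ℂ] C)
    (x : C ⊗[ℂ] A) (a : A) : C ⊗[ℂ] A :=
  (TensorProduct.map
      (TensorProduct.lift actC ∘ₗ TensorProduct.map LinearMap.id π.toLinearMap)
      (LinearMap.mul' ℂ A ∘ₗ
        TensorProduct.map (HopfAlgebra.antipode (R := ℂ)) (LinearMap.mul' ℂ A) ∘ₗ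
        (TensorProduct.leftComm ℂ A A A).toLinearMap) ∘ₗ
    (TensorProduct.tensorTensorTensorComm ℂ C A A (A ⊗[ℂ] A)).toLinearMap ∘ₗ
    TensorProduct.map LinearMap.id (comulTwo A))
    (x ⊗ₜ a)

/-!
Both the induced action and the Yetter–Drinfeld condition are conjugations in a convolution
algebra. Given an action of a Hopf algebra `H` on the first leg of `X ⊗ H`, the formula
`(x ⊗ d) ◁ a = (x ◁ a₍₂₎) ⊗ S(a₍₁₎) d a₍₃₎` is the conjugate of that action by the invertible
element `a ↦ 1 ⊗ a` of the convolution algebra `Hom(H, X ⊗ H)`. Hence it is again a module algebra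
action, it is functorial in `X` and `H`, and it is compatible with `id ⊗ Δ` because `Δ` sends
`1 ⊗ a` to the convolution product of its two legs. A Yetter–Drinfeld coaction is one that
intertwines an action with its conjugate, so the induced algebra is the equalizer of two
equivariant maps. Cancelling `a ↦ 1 ⊗ a` in the conjugate gives braided commutativity.
-/

section

open WithConv Coalgebra

variable {R : Type*} [CommSemiring R]

lemma exists_sum_tmul_tmul_eq {M N P : Type*} [AddCommMonoid M] [Module R M] [AddCommMonoid N]
    [Module R N] [AddCommMonoid P] [Module R P] (t : (M ⊗[R] N) ⊗[R] P) :
    ∃ (n : ℕ) (x : Fin n → M) (y : Fin n → N) (z : Fin n → P),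
      t = ∑ i, (x i ⊗ₜ y i) ⊗ₜ z i := by
  induction t with
  | zero => exact ⟨0, Fin.elim0, Fin.elim0, Fin.elim0, by simp⟩
  | tmul u p =>
    obtain ⟨n, x, y, rfl⟩ := TensorProduct.exists_sum_tmul_eq u
    exact ⟨n, x, y, fun _ => p, TensorProduct.sum_tmul ..⟩
  | add s t hs ht =>
    obtain ⟨m, x, y, z, rfl⟩ := hs
    obtain ⟨n, x', y', z', rfl⟩ := ht
    exact ⟨m + n, Fin.append x x', Fin.append y y', Fin.append z z', by simp [Fin.sum_univ_add]⟩

section ConvolutionSums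

variable {H X ι : Type*} [AddCommMonoid H] [Module R H] [CoalgebraStruct R H]
  [NonUnitalNonAssocSemiring X] [Module R X] [SMulCommClass R X X] [IsScalarTower R X X]
  [Fintype ι]

lemma convMul_apply_of_comul_eq_sum (f g : WithConv (H →ₗ[R] X)) {a : H} {a₁ a₂ : ι → H}
    (ha : comul (R := R) a = ∑ i, a₁ i ⊗ₜ a₂ i) :
    (f * g) a = ∑ i, f (a₁ i) * g (a₂ i) := by
  simp [LinearMap.convMul_apply, ha]

lemma convMul_convMul_apply_of_comul_eq_sum (f g h : WithConv (H →ₗ[R] X)) {a : H}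
    {a₁ a₂ a₃ : ι → H}
    (ha : TensorProduct.map (comul (R := R)) LinearMap.id (comul (R := R) a) =
      ∑ i, (a₁ i ⊗ₜ a₂ i) ⊗ₜ a₃ i) :
    (f * g * h) a = ∑ i, f (a₁ i) * g (a₂ i) * h (a₃ i) := by
  have hfg : TensorProduct.map (f * g).ofConv h.ofConv =
      TensorProduct.map (LinearMap.mul' R X ∘ₗ TensorProduct.map f.ofConv g.ofConv) h.ofConv ∘ₗ
        TensorProduct.map (comul (R := R)) LinearMap.id := by
    rw [← TensorProduct.map_comp, LinearMap.comp_id]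
    rfl
  simp [LinearMap.convMul_apply (f * g), hfg, ha]

end ConvolutionSums

section ConvolutionFunctoriality

variable {H K X Y : Type*} [AddCommMonoid H] [Module R H] [Coalgebra R H]
  [AddCommMonoid K] [Module R K] [Coalgebra R K]
  [Semiring X] [Algebra R X] [Semiring Y] [Algebra R Y]

/-- Postcomposition with an algebra homomorphism, as a morphism of convolution monoids. -/
def convPostcomp (f : X →ₐ[R] Y) : WithConv (H →ₗ[R] X) →* WithConv (H →ₗ[R] Y) where
  toFun u := toConv (f.toLinearMap ∘ₗ u.ofConv)
  map_one' := by ext; simp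
  map_mul' u v := by rw [LinearMap.algHom_comp_convMul_distrib, toConv_ofConv]

/-- Precomposition with a coalgebra homomorphism, as a morphism of convolution monoids. -/
def convPrecomp (φ : H →ₗc[R] K) : WithConv (K →ₗ[R] X) →* WithConv (H →ₗ[R] X) where
  toFun u := toConv (u.ofConv ∘ₗ φ.toLinearMap)
  map_one' := by ext; simp
  map_mul' u v := by rw [LinearMap.convMul_comp_coalgHom_distrib, toConv_ofConv]

@[simp]
lemma convPostcomp_apply (f : X →ₐ[R] Y) (u : WithConv (H →ₗ[R] X)) (a : H) :
    convPostcomp f u a = f (u a) := rfl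

@[simp]
lemma convPrecomp_apply (φ : H →ₗc[R] K) (u : WithConv (K →ₗ[R] X)) (a : H) :
    convPrecomp φ u a = u (φ a) := rfl

end ConvolutionFunctoriality

section LegAction

variable {K K' M M' X X' : Type*} [AddCommMonoid K] [Module R K] [AddCommMonoid K'] [Module R K']
  [AddCommMonoid M] [Module R M] [AddCommMonoid M'] [Module R M']
  [AddCommMonoid X] [Module R X] [AddCommMonoid X'] [Module R X']

variable (M) in
/-- The action on the first tensor leg, `(x ⊗ m) ◁ b = (x ◁ b) ⊗ m`. -/
def legAction (act : X →ₗ[R] K →ₗ[R] X) : X ⊗[R] M →ₗ[R] K →ₗ[R] X ⊗[R] M :=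
  (LinearMap.rTensorHom M ∘ₗ act.flip).flip

@[simp]
lemma legAction_tmul (act : X →ₗ[R] K →ₗ[R] X) (x : X) (m : M) (b : K) :
    legAction M act (x ⊗ₜ m) b = act x b ⊗ₜ m := rfl

lemma map_legAction {act : X →ₗ[R] K →ₗ[R] X} {act' : X' →ₗ[R] K' →ₗ[R] X'} {f : X →ₗ[R] X'}
    {φ : K →ₗ[R] K'} (hf : ∀ x b, f (act x b) = act' (f x) (φ b)) (g : M →ₗ[R] M')
    (z : X ⊗[R] M) (b : K) :
    TensorProduct.map f g (legAction M act z b) =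
      legAction M' act' (TensorProduct.map f g z) (φ b) := by
  induction z with
  | zero => simp
  | add z w hz hw => simp only [map_add, LinearMap.add_apply, hz, hw]
  | tmul x m => simp [hf]

end LegAction

section LegActionAlgebra

variable {H X Y : Type*} [AddCommMonoid H] [Module R H] [Semiring X] [Algebra R X]
  [Semiring Y] [Algebra R Y] {act : X →ₗ[R] H →ₗ[R] X}

lemma toConv_legAction_mul [CoalgebraStruct R H]
    (hact : ∀ x y : X, toConv (act (x * y)) = toConv (act x) * toConv (act y))
    (z w : X ⊗[R] Y) :
    toConv (legAction Y act (z * w)) = toConv (legAction Y act z) * toConv (legAction Y act w) := by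
  induction z with
  | zero => simp
  | add z₁ z₂ h₁ h₂ => rw [add_mul, map_add, toConv_add, h₁, h₂, map_add, toConv_add, add_mul]
  | tmul x r =>
    induction w with
    | zero => simp
    | add w₁ w₂ h₁ h₂ => rw [mul_add, map_add, toConv_add, h₁, h₂, map_add, toConv_add, mul_add]
    | tmul y s =>
      ext a
      obtain ⟨n, a₁, a₂, ha⟩ := TensorProduct.exists_sum_tmul_eq (comul (R := R) a)
      have hxy : act (x * y) a = _ := LinearMap.congr_fun (congrArg ofConv (hact x y)) a
      rw [convMul_apply_of_comul_eq_sum _ _ ha] at hxy ⊢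
      simp [hxy, TensorProduct.sum_tmul]

lemma toConv_legAction_one [Coalgebra R H] (hact : toConv (act 1) = 1) :
    toConv (legAction Y act 1) = 1 := by
  ext a
  have h1 : act 1 a = _ := LinearMap.congr_fun (congrArg ofConv hact) a
  simp [Algebra.TensorProduct.one_def, h1, Algebra.TensorProduct.algebraMap_apply]

end LegActionAlgebra

section ModuleAlgebra

variable {H K X : Type*} [Semiring H] [Bialgebra R H] [Semiring K] [Bialgebra R K]
  [Semiring X] [Algebra R X]

/-- A right action of a bialgebra making an algebra into a right module algebra. The two
compatibilities with the algebra structure, `(x y) ◁ a = (x ◁ a₍₁₎) (y ◁ a₍₂₎)` and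
`1 ◁ a = ε(a) 1`, are written in the convolution algebra of linear maps `H → X`. -/
structure IsModuleAlgebra (act : X →ₗ[R] H →ₗ[R] X) : Prop where
  act_mul (x : X) (a b : H) : act x (a * b) = act (act x a) b
  act_one (x : X) : act x 1 = x
  mul_act (x y : X) : toConv (act (x * y)) = toConv (act x) * toConv (act y)
  one_act : toConv (act 1) = 1

lemma isModuleAlgebra_iff_sum {act : X →ₗ[R] H →ₗ[R] X} :
    IsModuleAlgebra act ↔
      (∀ x a b, act x (a * b) = act (act x a) b) ∧ (∀ x, act x 1 = x) ∧
      (∀ (x y : X) (a : H) (n : ℕ) (a₁ a₂ : Fin n → H),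
        comul (R := R) a = ∑ i, a₁ i ⊗ₜ a₂ i →
        act (x * y) a = ∑ i, act x (a₁ i) * act y (a₂ i)) ∧
      ∀ a, act 1 a = counit (R := R) a • (1 : X) := by
  constructor
  · intro h
    refine ⟨h.act_mul, h.act_one, fun x y a n a₁ a₂ ha => ?_, fun a => ?_⟩
    · exact (LinearMap.congr_fun (congrArg ofConv (h.mul_act x y)) a).trans
        (convMul_apply_of_comul_eq_sum _ _ ha)
    · exact (LinearMap.congr_fun (congrArg ofConv h.one_act) a).trans
        (Algebra.algebraMap_eq_smul_one _)
  · rintro ⟨act_mul, act_one, mul_act, one_act⟩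
    refine ⟨act_mul, act_one, fun x y => ?_, ?_⟩
    · ext a
      obtain ⟨n, a₁, a₂, ha⟩ := TensorProduct.exists_sum_tmul_eq (comul (R := R) a)
      exact (mul_act x y a n a₁ a₂ ha).trans (convMul_apply_of_comul_eq_sum _ _ ha).symm
    · ext a
      exact (one_act a).trans (Algebra.algebraMap_eq_smul_one _).symm

lemma IsModuleAlgebra.comp {act : X →ₗ[R] K →ₗ[R] X} (hact : IsModuleAlgebra act)
    (π : H →ₐc[R] K) : IsModuleAlgebra (act.compl₂ (π : H →ₗ[R] K)) where
  act_mul x a b := by simp [hact.act_mul]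
  act_one x := by simp [hact.act_one]
  mul_act x y := (congrArg (convPrecomp (π : H →ₗc[R] K)) (hact.mul_act x y)).trans (map_mul _ _ _)
  one_act := (congrArg (convPrecomp (π : H →ₗc[R] K)) hact.one_act).trans (map_one _)

end ModuleAlgebra

section CofreeCoaction

variable {H K X : Type*} [Semiring H] [Bialgebra R H] [Semiring K] [Bialgebra R K]
  [Semiring X] [Algebra R X]

variable (R H X) in
/-- The coaction `id ⊗ Δ` of `H` on `X ⊗ H`. -/
def cofreeCoaction : X ⊗[R] H →ₐ[R] (X ⊗[R] H) ⊗[R] H :=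
  (Algebra.TensorProduct.assoc R R R X H H).symm.toAlgHom.comp
    (Algebra.TensorProduct.map (AlgHom.id R X) (Bialgebra.comulAlgHom R H))

lemma cofreeCoaction_tmul {ι : Type*} [Fintype ι] {d : H} {d₁ d₂ : ι → H}
    (hd : comul (R := R) d = ∑ i, d₁ i ⊗ₜ d₂ i) (x : X) :
    cofreeCoaction R H X (x ⊗ₜ d) = ∑ i, (x ⊗ₜ d₁ i) ⊗ₜ d₂ i := by
  simp [cofreeCoaction, hd, TensorProduct.tmul_sum]

lemma cofreeCoaction_legAction {L : Type*} [AddCommMonoid L] [Module R L]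
    (act : X →ₗ[R] L →ₗ[R] X) (z : X ⊗[R] H) (b : L) :
    cofreeCoaction R H X (legAction H act z b) =
      legAction H (legAction H act) (cofreeCoaction R H X z) b := by
  induction z with
  | zero => simp
  | add z w hz hw => simp only [map_add, LinearMap.add_apply, hz, hw]
  | tmul x d =>
    obtain ⟨n, d₁, d₂, hd⟩ := TensorProduct.exists_sum_tmul_eq (comul (R := R) d)
    simp [cofreeCoaction_tmul hd]

/-- The map `x ⊗ d ↦ (x ⊗ π(d₍₁₎)) ⊗ d₍₂₎`, whose equalizer with `γ ⊗ id` is the algebra induced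
from a coaction `γ` on `X`. -/
def cotensorMap (π : H →ₐc[R] K) : X ⊗[R] H →ₐ[R] (X ⊗[R] K) ⊗[R] H :=
  (Algebra.TensorProduct.map (Algebra.TensorProduct.map (AlgHom.id R X) (π : H →ₐ[R] K))
    (AlgHom.id R H)).comp (cofreeCoaction R H X)

lemma cotensorMap_tmul (π : H →ₐc[R] K) {ι : Type*} [Fintype ι] {d : H} {d₁ d₂ : ι → H}
    (hd : comul (R := R) d = ∑ i, d₁ i ⊗ₜ d₂ i) (x : X) :
    cotensorMap π (x ⊗ₜ d) = ∑ i, (x ⊗ₜ π (d₁ i)) ⊗ₜ d₂ i := by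
  simp [cotensorMap, cofreeCoaction_tmul hd]

/-- The induced algebra `X □_K H ⊆ X ⊗ H` of a coaction `γ` of `K` along `π : H → K`. -/
def inducedAlgebra (π : H →ₐc[R] K) (γ : X →ₐ[R] X ⊗[R] K) : Subalgebra R (X ⊗[R] H) :=
  AlgHom.equalizer (Algebra.TensorProduct.map γ (AlgHom.id R H)) (cotensorMap π)

lemma mem_inducedAlgebra {π : H →ₐc[R] K} {γ : X →ₐ[R] X ⊗[R] K} {z : X ⊗[R] H} :
    z ∈ inducedAlgebra π γ ↔
      Algebra.TensorProduct.map γ (AlgHom.id R H) z = cotensorMap π z := Iff.rfl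

end CofreeCoaction

section Adjoint

variable {H K X Y : Type*} [Semiring H] [HopfAlgebra R H] [Semiring K] [HopfAlgebra R K]
  [Semiring X] [Algebra R X] [Semiring Y] [Algebra R Y]

variable (R H) in
/-- The identity of a Hopf algebra as a unit of its convolution algebra; its inverse is the
antipode. -/
def convId : (WithConv (H →ₗ[R] H))ˣ where
  val := toConv LinearMap.id
  inv := toConv (HopfAlgebra.antipode R)
  val_inv := LinearMap.id_mul_antipode
  inv_val := LinearMap.antipode_mul_id

variable (R H X) in
/-- The map `a ↦ 1 ⊗ a` as a convolution unit; its inverse is `a ↦ 1 ⊗ S(a)`. -/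
def rightLeg : (WithConv (H →ₗ[R] X ⊗[R] H))ˣ :=
  Units.map (convPostcomp Algebra.TensorProduct.includeRight) (convId R H)

@[simp]
lemma rightLeg_apply (a : H) : (rightLeg R H X).val a = 1 ⊗ₜ a := rfl

@[simp]
lemma inv_rightLeg_apply (a : H) :
    (rightLeg R H X)⁻¹.val a = 1 ⊗ₜ HopfAlgebra.antipode R a := rfl

lemma convPostcomp_map_rightLeg (f : X →ₐ[R] Y) (φ : H →ₐc[R] K) :
    Units.map (convPostcomp (Algebra.TensorProduct.map f (φ : H →ₐ[R] K))) (rightLeg R H X) =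
      Units.map (convPrecomp (φ : H →ₗc[R] K)) (rightLeg R K Y) := by
  ext a
  simp

lemma convPostcomp_cofreeCoaction_rightLeg :
    Units.map (convPostcomp (cofreeCoaction R H X)) (rightLeg R H X) =
      Units.map (convPostcomp Algebra.TensorProduct.includeLeft) (rightLeg R H X) *
        rightLeg R H (X ⊗[R] H) := by
  ext a
  obtain ⟨n, a₁, a₂, ha⟩ := TensorProduct.exists_sum_tmul_eq (comul (R := R) a)
  refine (cofreeCoaction_tmul ha 1).trans
    (Eq.trans ?_ (convMul_apply_of_comul_eq_sum _ _ ha).symm)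
  simp

/-- The action `(x ⊗ d) ◁ a = (x ◁ a₍₂₎) ⊗ S(a₍₁₎) d a₍₃₎` on `X ⊗ H`, defined as the conjugate
of the action on the first leg by the convolution unit `a ↦ 1 ⊗ a`. -/
def adjointAction (act : X →ₗ[R] H →ₗ[R] X) : X ⊗[R] H →ₗ[R] H →ₗ[R] X ⊗[R] H :=
  (WithConv.linearEquiv R _).toLinearMap ∘ₗ
    LinearMap.mulLeftRight R ((rightLeg R H X)⁻¹.val, (rightLeg R H X).val) ∘ₗ
      (WithConv.linearEquiv R _).symm.toLinearMap ∘ₗ legAction H act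

variable (act : X →ₗ[R] H →ₗ[R] X)

lemma toConv_adjointAction (z : X ⊗[R] H) :
    toConv (adjointAction act z) =
      (rightLeg R H X)⁻¹.val * toConv (legAction H act z) * (rightLeg R H X).val := rfl

lemma rightLeg_mul_adjointAction (z : X ⊗[R] H) :
    (rightLeg R H X).val * toConv (adjointAction act z) =
      toConv (legAction H act z) * (rightLeg R H X).val := by
  rw [toConv_adjointAction, mul_assoc, Units.mul_inv_cancel_left]

lemma adjointAction_apply {ι : Type*} [Fintype ι] {a : H} {a₁ a₂ a₃ : ι → H}
    (ha : TensorProduct.map (comul (R := R)) LinearMap.id (comul (R := R) a) =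
      ∑ i, (a₁ i ⊗ₜ a₂ i) ⊗ₜ a₃ i) (z : X ⊗[R] H) :
    adjointAction act z a =
      ∑ i, (1 ⊗ₜ HopfAlgebra.antipode R (a₁ i)) * legAction H act z (a₂ i) * (1 ⊗ₜ a₃ i) :=
  convMul_convMul_apply_of_comul_eq_sum (rightLeg R H X)⁻¹.val (toConv (legAction H act z))
    (rightLeg R H X).val ha

lemma adjointAction_tmul {ι : Type*} [Fintype ι] {a : H} {a₁ a₂ a₃ : ι → H}
    (ha : TensorProduct.map (comul (R := R)) LinearMap.id (comul (R := R) a) =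
      ∑ i, (a₁ i ⊗ₜ a₂ i) ⊗ₜ a₃ i) (x : X) (d : H) :
    adjointAction act (x ⊗ₜ d) a =
      ∑ i, act x (a₂ i) ⊗ₜ (HopfAlgebra.antipode R (a₁ i) * d * a₃ i) := by
  simp [adjointAction_apply act ha]

lemma adjointAction_one_right (hact : ∀ x, act x 1 = x) (z : X ⊗[R] H) :
    adjointAction act z 1 = z := by
  have h1 : TensorProduct.map (comul (R := R)) LinearMap.id (comul (R := R) (1 : H)) =
      ∑ _ : Unit, ((1 : H) ⊗ₜ[R] (1 : H)) ⊗ₜ[R] (1 : H) := by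
    simp [Algebra.TensorProduct.one_def]
  induction z with
  | zero => simp
  | add z w hz hw => simp [hz, hw]
  | tmul x d => simp [adjointAction_tmul act h1, hact]

lemma adjointAction_mul_right (hact : ∀ x a b, act x (a * b) = act (act x a) b)
    (z : X ⊗[R] H) (a b : H) :
    adjointAction act z (a * b) = adjointAction act (adjointAction act z a) b := by
  obtain ⟨m, a₁, a₂, a₃, ha⟩ := exists_sum_tmul_tmul_eq
    (TensorProduct.map (comul (R := R)) LinearMap.id (comul (R := R) a))
  obtain ⟨n, b₁, b₂, b₃, hb⟩ := exists_sum_tmul_tmul_eq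
    (TensorProduct.map (comul (R := R)) LinearMap.id (comul (R := R) b))
  have hab : TensorProduct.map (comul (R := R)) LinearMap.id (comul (R := R) (a * b)) =
      ∑ p : Fin m × Fin n,
        ((a₁ p.1 * b₁ p.2) ⊗ₜ[R] (a₂ p.1 * b₂ p.2)) ⊗ₜ[R] (a₃ p.1 * b₃ p.2) := by
    have hmul (u v : H ⊗[R] H) : TensorProduct.map (comul (R := R)) LinearMap.id (u * v) =
        TensorProduct.map (comul (R := R)) LinearMap.id u *
          TensorProduct.map (comul (R := R)) LinearMap.id v :=
      map_mul (Algebra.TensorProduct.map (Bialgebra.comulAlgHom R H) (AlgHom.id R H)) u v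
    rw [Bialgebra.comul_mul, hmul, ha, hb, Finset.sum_mul_sum, Fintype.sum_prod_type]
    simp
  induction z with
  | zero => simp
  | add z w hz hw => simp [hz, hw]
  | tmul x d =>
    rw [adjointAction_tmul act hab, adjointAction_tmul act ha, map_sum, LinearMap.sum_apply,
      Fintype.sum_prod_type]
    simp [adjointAction_tmul act hb, hact, HopfAlgebra.antipode_mul_antidistrib, mul_assoc]

lemma IsModuleAlgebra.adjointAction {act : X →ₗ[R] H →ₗ[R] X} (hact : IsModuleAlgebra act) :
    IsModuleAlgebra (adjointAction act) where
  act_mul := adjointAction_mul_right act hact.act_mul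
  act_one := adjointAction_one_right act hact.act_one
  mul_act z w := by
    simp [toConv_adjointAction, toConv_legAction_mul hact.mul_act, mul_assoc]
  one_act := by
    simp [toConv_adjointAction, toConv_legAction_one hact.one_act]

lemma map_adjointAction {f : X →ₐ[R] Y} {φ : H →ₐc[R] K} {act : X →ₗ[R] H →ₗ[R] X}
    {act' : Y →ₗ[R] K →ₗ[R] Y} (hf : ∀ x a, f (act x a) = act' (f x) (φ a))
    (z : X ⊗[R] H) (a : H) :
    Algebra.TensorProduct.map f (φ : H →ₐ[R] K) (adjointAction act z a) =
      adjointAction act' (Algebra.TensorProduct.map f (φ : H →ₐ[R] K) z) (φ a) := by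
  set F := Algebra.TensorProduct.map f (φ : H →ₐ[R] K)
  have hleg : convPostcomp F (toConv (legAction H act z)) =
      convPrecomp (φ : H →ₗc[R] K) (toConv (legAction K act' (F z))) :=
    WithConv.ext (LinearMap.ext
      (map_legAction (f := f.toLinearMap) (φ := (φ : H →ₗ[R] K)) hf (φ : H →ₗ[R] K) z))
  have hconv : convPostcomp F (toConv (adjointAction act z)) =
      convPrecomp (φ : H →ₗc[R] K) (toConv (adjointAction act' (F z))) := by
    simp only [toConv_adjointAction, map_mul, hleg, ← Units.coe_map, map_inv, F,
      convPostcomp_map_rightLeg]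
  exact LinearMap.congr_fun (congrArg ofConv hconv) a

lemma map_id_adjointAction {f : X →ₐ[R] Y} {act : X →ₗ[R] H →ₗ[R] X}
    {act' : Y →ₗ[R] H →ₗ[R] Y} (hf : ∀ x a, f (act x a) = act' (f x) a)
    (z : X ⊗[R] H) (a : H) :
    Algebra.TensorProduct.map f (AlgHom.id R H) (adjointAction act z a) =
      adjointAction act' (Algebra.TensorProduct.map f (AlgHom.id R H) z) a :=
  map_adjointAction (φ := BialgHom.id R H) hf z a

lemma toConv_legAction_adjointAction {M : Type*} [Semiring M] [Algebra R M]
    (t : (X ⊗[R] H) ⊗[R] M) :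
    toConv (legAction M (adjointAction act) t) =
      convPostcomp Algebra.TensorProduct.includeLeft (rightLeg R H X)⁻¹.val *
        toConv (legAction M (legAction H act) t) *
          convPostcomp Algebra.TensorProduct.includeLeft (rightLeg R H X).val := by
  induction t with
  | zero => simp
  | add s t hs ht => simp only [map_add, toConv_add, hs, ht, mul_add, add_mul]
  | tmul z m =>
    ext a
    obtain ⟨n, a₁, a₂, a₃, ha⟩ := exists_sum_tmul_tmul_eq
      (TensorProduct.map (comul (R := R)) LinearMap.id (comul (R := R) a))
    rw [convMul_convMul_apply_of_comul_eq_sum _ _ _ ha]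
    simp [adjointAction_apply act ha, TensorProduct.sum_tmul]

lemma cofreeCoaction_adjointAction (z : X ⊗[R] H) (a : H) :
    cofreeCoaction R H X (adjointAction act z a) =
      adjointAction (adjointAction act) (cofreeCoaction R H X z) a := by
  have hleg : convPostcomp (cofreeCoaction R H X) (toConv (legAction H act z)) =
      toConv (legAction H (legAction H act) (cofreeCoaction R H X z)) :=
    WithConv.ext (LinearMap.ext (cofreeCoaction_legAction act z))
  have hconv : convPostcomp (cofreeCoaction R H X) (toConv (adjointAction act z)) =
      toConv (adjointAction (adjointAction act) (cofreeCoaction R H X z)) := by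
    simp only [toConv_adjointAction, toConv_legAction_adjointAction, map_mul, hleg,
      ← Units.coe_map, map_inv, convPostcomp_cofreeCoaction_rightLeg, mul_inv_rev, Units.val_mul,
      mul_assoc]
  exact LinearMap.congr_fun (congrArg ofConv hconv) a

/-- The Yetter–Drinfeld condition `γ(x ◁ a) = (x₍₀₎ ◁ a₍₂₎) ⊗ S(a₍₁₎) x₍₁₎ a₍₃₎`: the coaction
intertwines the action on `X` with the adjoint action on `X ⊗ H`. -/
def IsYetterDrinfeld (γ : X →ₐ[R] X ⊗[R] H) : Prop :=
  ∀ x a, γ (act x a) = adjointAction act (γ x) a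

lemma isYetterDrinfeld_iff_sum (γ : X →ₐ[R] X ⊗[R] H) :
    IsYetterDrinfeld act γ ↔
      ∀ (x : X) (a : H) (m n : ℕ) (a₁ a₂ a₃ : Fin m → H) (x₀ : Fin n → X) (x₁ : Fin n → H),
        TensorProduct.map (comul (R := R)) LinearMap.id (comul (R := R) a) =
          ∑ i, (a₁ i ⊗ₜ a₂ i) ⊗ₜ a₃ i →
        γ x = ∑ j, x₀ j ⊗ₜ x₁ j →
        γ (act x a) = ∑ i, ∑ j, act (x₀ j) (a₂ i) ⊗ₜ
          (HopfAlgebra.antipode R (a₁ i) * x₁ j * a₃ i) := by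
  have hsum {a : H} {m n : ℕ} {a₁ a₂ a₃ : Fin m → H} (x₀ : Fin n → X) (x₁ : Fin n → H)
      (ha : TensorProduct.map (comul (R := R)) LinearMap.id (comul (R := R) a) =
        ∑ i, (a₁ i ⊗ₜ a₂ i) ⊗ₜ a₃ i) :
      adjointAction act (∑ j, x₀ j ⊗ₜ x₁ j) a =
        ∑ i, ∑ j, act (x₀ j) (a₂ i) ⊗ₜ (HopfAlgebra.antipode R (a₁ i) * x₁ j * a₃ i) := by
    rw [Finset.sum_comm]
    simp [adjointAction_tmul act ha]
  constructor
  · intro h x a m n a₁ a₂ a₃ x₀ x₁ ha hx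
    rw [h, hx, hsum x₀ x₁ ha]
  · intro h x a
    obtain ⟨m, a₁, a₂, a₃, ha⟩ := exists_sum_tmul_tmul_eq
      (TensorProduct.map (comul (R := R)) LinearMap.id (comul (R := R) a))
    obtain ⟨n, x₀, x₁, hx⟩ := TensorProduct.exists_sum_tmul_eq (γ x)
    rw [h x a m n a₁ a₂ a₃ x₀ x₁ ha hx, hx, hsum x₀ x₁ ha]

end Adjoint

section InducedAction

variable {H K X : Type*} [Semiring H] [HopfAlgebra R H] [Semiring X] [Algebra R X] [Semiring K]

/-- The action `(x ⊗ d) ◁ a = (x ◁ π(a₍₂₎)) ⊗ S(a₍₁₎) d a₍₃₎` of `H` on `X ⊗ H` induced by an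
action of `K` on `X` along `π : H → K`. -/
def inducedAction [Bialgebra R K] (π : H →ₐc[R] K) (act : X →ₗ[R] K →ₗ[R] X) :
    X ⊗[R] H →ₗ[R] H →ₗ[R] X ⊗[R] H :=
  adjointAction (act.compl₂ (π : H →ₗ[R] K))

variable [HopfAlgebra R K] {π : H →ₐc[R] K} {act : X →ₗ[R] K →ₗ[R] X} {γ : X →ₐ[R] X ⊗[R] K}

lemma map_coaction_inducedAction (hγ : IsYetterDrinfeld act γ) (z : X ⊗[R] H) (a : H) :
    Algebra.TensorProduct.map γ (AlgHom.id R H) (inducedAction π act z a) =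
      inducedAction π (adjointAction act) (Algebra.TensorProduct.map γ (AlgHom.id R H) z) a :=
  map_id_adjointAction (fun x b => hγ x (π b)) z a

lemma cotensorMap_inducedAction (z : X ⊗[R] H) (a : H) :
    cotensorMap π (inducedAction π act z a) =
      inducedAction π (adjointAction act) (cotensorMap π z) a := by
  have hπ (w : X ⊗[R] H) (b : H) :
      Algebra.TensorProduct.map (AlgHom.id R X) (π : H →ₐ[R] K) (inducedAction π act w b) =
        adjointAction act (Algebra.TensorProduct.map (AlgHom.id R X) (π : H →ₐ[R] K) w) (π b) :=
    map_adjointAction (fun _ _ => rfl) w b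
  exact (congrArg _ (cofreeCoaction_adjointAction _ z a)).trans (map_id_adjointAction hπ _ a)

lemma inducedAction_mem_inducedAlgebra (hγ : IsYetterDrinfeld act γ) {z : X ⊗[R] H}
    (hz : z ∈ inducedAlgebra π γ) (a : H) : inducedAction π act z a ∈ inducedAlgebra π γ := by
  rw [mem_inducedAlgebra] at hz ⊢
  rw [map_coaction_inducedAction hγ, hz, cotensorMap_inducedAction]

end InducedAction

section Braided

variable {H K X : Type*} [AddCommMonoid K] [Module R K] [Semiring X] [Algebra R X]

/-- The braided opposite product `y₍₀₎ (x ◁ y₍₁₎)` of `x` and `y`; an algebra is braided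
commutative when it agrees with the product `x y`. -/
def braidedMul (act : X →ₗ[R] K →ₗ[R] X) (γ : X →ₗ[R] X ⊗[R] K) (x y : X) : X :=
  LinearMap.mul' R X (TensorProduct.map LinearMap.id (act x) (γ y))

lemma braidedMul_eq_sum (act : X →ₗ[R] K →ₗ[R] X) {γ : X →ₗ[R] X ⊗[R] K} {ι : Type*} [Fintype ι]
    {y : X} {y₀ : ι → X} {y₁ : ι → K} (hy : γ y = ∑ i, y₀ i ⊗ₜ y₁ i) (x : X) :
    braidedMul act γ x y = ∑ i, y₀ i * act x (y₁ i) := by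
  simp [braidedMul, hy]

variable [Semiring H] [Algebra R H]

/-- The map `(y ⊗ b) ⊗ d ↦ (y ⊗ 1) (z ◁ b) (1 ⊗ d)`, where `K` acts on the first leg of
`z ∈ X ⊗ H`; it interpolates between products and braided opposite products in `X ⊗ H`. -/
def interleave (act : X →ₗ[R] K →ₗ[R] X) (z : X ⊗[R] H) : (X ⊗[R] K) ⊗[R] H →ₗ[R] X ⊗[R] H :=
  LinearMap.mul' R (X ⊗[R] H) ∘ₗ TensorProduct.map
    (LinearMap.mul' R (X ⊗[R] H) ∘ₗ TensorProduct.map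
      (Algebra.TensorProduct.includeLeft (S := R)).toLinearMap (legAction H act z))
    Algebra.TensorProduct.includeRight.toLinearMap

lemma interleave_tmul (act : X →ₗ[R] K →ₗ[R] X) (z : X ⊗[R] H) (y : X) (b : K) (d : H) :
    interleave act z ((y ⊗ₜ b) ⊗ₜ d) = (y ⊗ₜ 1) * legAction H act z b * (1 ⊗ₜ d) := rfl

lemma interleave_map_coaction {act : X →ₗ[R] K →ₗ[R] X} {γ : X →ₗ[R] X ⊗[R] K}
    (hcomm : ∀ x y, x * y = braidedMul act γ x y) (z w : X ⊗[R] H) :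
    interleave act z (TensorProduct.map γ LinearMap.id w) = z * w := by
  induction w with
  | zero => simp
  | add w₁ w₂ h₁ h₂ => simp only [map_add, mul_add, h₁, h₂]
  | tmul y d =>
    obtain ⟨n, y₀, y₁, hy⟩ := TensorProduct.exists_sum_tmul_eq (γ y)
    have hinterleave (z : X ⊗[R] H) :
        interleave act z (TensorProduct.map γ LinearMap.id (y ⊗ₜ d)) =
          ∑ i, (y₀ i ⊗ₜ 1) * legAction H act z (y₁ i) * (1 ⊗ₜ d) := by
      simp [hy, TensorProduct.sum_tmul, interleave_tmul]
    rw [hinterleave]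
    induction z with
    | zero => simp
    | add z₁ z₂ h₁ h₂ =>
      simp only [map_add, LinearMap.add_apply, mul_add, add_mul, Finset.sum_add_distrib, h₁, h₂]
    | tmul x e => simp [hcomm x y, braidedMul_eq_sum act hy, TensorProduct.sum_tmul]

end Braided

section Induction

variable {H K X : Type*} [Semiring H] [HopfAlgebra R H] [Semiring X] [Algebra R X] [Semiring K]

lemma interleave_cotensorMap [Bialgebra R K] (π : H →ₐc[R] K) (act : X →ₗ[R] K →ₗ[R] X)
    (z w : X ⊗[R] H) :
    interleave act z (cotensorMap π w) =
      braidedMul (inducedAction π act) (cofreeCoaction R H X).toLinearMap z w := by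
  induction w with
  | zero => simp [braidedMul]
  | add w₁ w₂ h₁ h₂ => simp only [braidedMul, map_add] at h₁ h₂ ⊢; rw [h₁, h₂]
  | tmul y d =>
    obtain ⟨n, d₁, d₂, hd⟩ := TensorProduct.exists_sum_tmul_eq (comul (R := R) d)
    have hcancel := LinearMap.congr_fun (congrArg ofConv
      (rightLeg_mul_adjointAction (act.compl₂ (π : H →ₗ[R] K)) z)) d
    rw [convMul_apply_of_comul_eq_sum _ _ hd, convMul_apply_of_comul_eq_sum _ _ hd] at hcancel
    calc
      _ = ∑ i, (y ⊗ₜ 1) * legAction H act z (π (d₁ i)) * (1 ⊗ₜ d₂ i) := by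
        simp [cotensorMap_tmul π hd, interleave_tmul]
      _ = (y ⊗ₜ 1) * ∑ i, legAction H act z (π (d₁ i)) * (1 ⊗ₜ d₂ i) := by
        simp only [Finset.mul_sum, mul_assoc]
      _ = (y ⊗ₜ 1) * ∑ i, (1 ⊗ₜ d₁ i) * inducedAction π act z (d₂ i) :=
        congrArg _ hcancel.symm
      _ = ∑ i, (y ⊗ₜ d₁ i) * inducedAction π act z (d₂ i) := by
        simp [Finset.mul_sum, ← mul_assoc]
      _ = _ := (braidedMul_eq_sum _ (γ := (cofreeCoaction R H X).toLinearMap)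
        (cofreeCoaction_tmul hd y) z).symm

theorem induced_yetter_drinfeld_general [HopfAlgebra R K] (π : H →ₐc[R] K)
    (γ : X →ₐ[R] X ⊗[R] K) (act : X →ₗ[R] K →ₗ[R] X) (hact : IsModuleAlgebra act)
    (hγ : IsYetterDrinfeld act γ) :
    (∀ z ∈ inducedAlgebra π γ, ∀ a, inducedAction π act z a ∈ inducedAlgebra π γ) ∧
    IsModuleAlgebra (inducedAction π act) ∧
    IsYetterDrinfeld (inducedAction π act) (cofreeCoaction R H X) ∧
    ((∀ x y, x * y = braidedMul act γ.toLinearMap x y) →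
      ∀ z, ∀ w ∈ inducedAlgebra π γ,
        z * w = braidedMul (inducedAction π act) (cofreeCoaction R H X).toLinearMap z w) := by
  refine ⟨fun z hz a => inducedAction_mem_inducedAlgebra hγ hz a, (hact.comp π).adjointAction,
    cofreeCoaction_adjointAction _, fun hcomm z w hw => ?_⟩
  rw [← interleave_cotensorMap, ← mem_inducedAlgebra.1 hw]
  exact (interleave_map_coaction hcomm z w).symm

end Induction

variable {A B C}

lemma mem_IndSub_iff (π : A →ₐc[ℂ] B) (γ : C →ₐ[ℂ] C ⊗[ℂ] B) (x : C ⊗[ℂ] A) :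
    x ∈ IndSub A B C π γ ↔ x ∈ inducedAlgebra π γ := by
  have hassoc : TensorProduct.assoc ℂ C B A (cotensorMap π x) =
      TensorProduct.map LinearMap.id
        (TensorProduct.map (π : A →ₐ[ℂ] B).toLinearMap LinearMap.id ∘ₗ comul (R := ℂ)) x := by
    induction x with
    | zero => simp
    | add x y hx hy => simp only [map_add, hx, hy]
    | tmul c a =>
      obtain ⟨n, a₁, a₂, ha⟩ := TensorProduct.exists_sum_tmul_eq (comul (R := ℂ) a)
      simp [cotensorMap_tmul π ha, ha, TensorProduct.tmul_sum]
  rw [mem_inducedAlgebra, ← (TensorProduct.assoc ℂ C B A).injective.eq_iff, hassoc]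
  rfl

lemma actInd_eq_inducedAction (π : A →ₐc[ℂ] B) (actC : C →ₗ[ℂ] B →ₗ[ℂ] C) (x : C ⊗[ℂ] A)
    (a : A) : actInd A B C π actC x a = inducedAction π actC x a := by
  obtain ⟨n, a₁, a₂, a₃, ha⟩ := exists_sum_tmul_tmul_eq
    (TensorProduct.map (comul (R := ℂ)) LinearMap.id (comul (R := ℂ) a))
  have hcomulTwo : comulTwo A a = ∑ i, a₂ i ⊗ₜ (a₁ i ⊗ₜ a₃ i) := by
    have hcoassoc := (coassoc_apply (R := ℂ) a).symm.trans
      (congrArg (TensorProduct.assoc ℂ A A A) ha)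
    refine (congrArg (TensorProduct.leftComm ℂ A A A) hcoassoc).trans ?_
    simp
  induction x with
  | zero => simp [actInd]
  | add x y hx hy =>
    rw [map_add, LinearMap.add_apply, ← hx, ← hy]
    simp [actInd, TensorProduct.add_tmul]
  | tmul c d =>
    rw [inducedAction, adjointAction_tmul _ ha]
    simp [actInd, hcomulTwo, TensorProduct.tmul_sum, mul_assoc]

end

/-- induction of (braided commutative) Yetter–Drinfeld algebras.
Given a surjective morphism `π : A → B` of Hopf *-algebras with `S_A² = id` and a
`B`-Yetter–Drinfeld algebra `(C, ◁, γ)`, the operation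
`(c ⊗ a') ◁' a = (c ◁ π(a₍₂₎)) ⊗ S_A(a₍₁₎) a' a₍₃₎` maps `Ind(C) ⊗ A` into `Ind(C)`,
makes `Ind(C)` a right `A`-module algebra, and `(Ind(C), ◁', id ⊗ Δ_A)` satisfies the
Yetter–Drinfeld condition over `A`; if `(C, ◁, γ)` is braided commutative then so is
`(Ind(C), ◁', id ⊗ Δ_A)`.  (Sweedler-type identities are stated for every
decomposition into sums of simple tensors.) -/
theorem induced_yetter_drinfeld
    [StarRing A] [StarModule ℂ A] [StarRing B] [StarModule ℂ B]
    [StarRing C] [StarModule ℂ C]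
    -- Hopf *-algebra structures:
    (hAstar : ∀ a : A,
      Coalgebra.comul (R := ℂ) (star a) = starT A A (Coalgebra.comul (R := ℂ) a))
    (hBstar : ∀ b : B,
      Coalgebra.comul (R := ℂ) (star b) = starT B B (Coalgebra.comul (R := ℂ) b))
    (hSA2 : ∀ a : A,
      HopfAlgebra.antipode (R := ℂ) (HopfAlgebra.antipode (R := ℂ) a) = a)
    -- the surjective Hopf *-algebra morphism π:
    (π : A →ₐ[ℂ] B) (hπsurj : Function.Surjective π)
    (hπcomul : ∀ a : A, Coalgebra.comul (R := ℂ) (π a) =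
      TensorProduct.map π.toLinearMap π.toLinearMap (Coalgebra.comul (R := ℂ) a))
    (hπcounit : ∀ a : A, Coalgebra.counit (R := ℂ) (π a) = Coalgebra.counit (R := ℂ) a)
    (hπantipode : ∀ a : A,
      HopfAlgebra.antipode (R := ℂ) (π a) = π (HopfAlgebra.antipode (R := ℂ) a))
    (hπstar : ∀ a : A, π (star a) = star (π a))
    -- the right B-comodule *-algebra structure γ on C:
    (γ : C →ₐ[ℂ] C ⊗[ℂ] B)
    (hγcoassoc : ∀ c : C,
      (TensorProduct.assoc ℂ C B B)
          ((TensorProduct.map γ.toLinearMap LinearMap.id) (γ c)) =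
        (TensorProduct.map LinearMap.id (Coalgebra.comul (R := ℂ))) (γ c))
    (hγcounit : ∀ c : C,
      (TensorProduct.rid ℂ C)
          ((TensorProduct.map LinearMap.id (Coalgebra.counit (R := ℂ))) (γ c)) = c)
    (hγstar : ∀ c : C, γ (star c) = starT C B (γ c))
    -- the right B-module *-algebra structure ◁ on C:
    (actC : C →ₗ[ℂ] B →ₗ[ℂ] C)
    (hact_mul : ∀ (c : C) (b b' : B), actC c (b * b') = actC (actC c b) b')
    (hact_one : ∀ c : C, actC c 1 = c)
    (hact_prod : ∀ (c c' : C) (b : B) (m : ℕ) (b1 b2 : Fin m → B),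
      Coalgebra.comul (R := ℂ) b = ∑ i, b1 i ⊗ₜ b2 i →
      actC (c * c') b = ∑ i, actC c (b1 i) * actC c' (b2 i))
    (hact_unit : ∀ b : B, actC 1 b = Coalgebra.counit (R := ℂ) b • (1 : C))
    (hact_star : ∀ (c : C) (b : B),
      star (actC c b) = actC (star c) (star (HopfAlgebra.antipode (R := ℂ) b)))
    -- the Yetter–Drinfeld condition for (C, ◁, γ):
    (hYD : ∀ (c : C) (b : B) (m m' : ℕ) (b1 b2 b3 : Fin m → B)
        (c0 : Fin m' → C) (c1 : Fin m' → B),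
      (TensorProduct.map (Coalgebra.comul (R := ℂ)) LinearMap.id)
          (Coalgebra.comul (R := ℂ) b) = ∑ i, (b1 i ⊗ₜ b2 i) ⊗ₜ b3 i →
      γ c = ∑ j, c0 j ⊗ₜ c1 j →
      γ (actC c b) = ∑ i, ∑ j, actC (c0 j) (b2 i) ⊗ₜ
        (HopfAlgebra.antipode (R := ℂ) (b1 i) * c1 j * b3 i)) :
    -- ◁' maps Ind(C) ⊗ A into Ind(C):
    (∀ x ∈ IndSub A B C π γ, ∀ a : A, actInd A B C π actC x a ∈ IndSub A B C π γ) ∧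
    -- Ind(C) is a right A-module algebra:
    (∀ (x : C ⊗[ℂ] A) (a a' : A),
      actInd A B C π actC x (a * a') = actInd A B C π actC (actInd A B C π actC x a) a') ∧
    (∀ x : C ⊗[ℂ] A, actInd A B C π actC x 1 = x) ∧
    (∀ (x y : C ⊗[ℂ] A) (a : A) (m : ℕ) (a1 a2 : Fin m → A),
      Coalgebra.comul (R := ℂ) a = ∑ i, a1 i ⊗ₜ a2 i →
      actInd A B C π actC (x * y) a =
        ∑ i, actInd A B C π actC x (a1 i) * actInd A B C π actC y (a2 i)) ∧
    (∀ a : A, actInd A B C π actC 1 a =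
      Coalgebra.counit (R := ℂ) a • (1 : C ⊗[ℂ] A)) ∧
    -- the Yetter–Drinfeld condition over A:
    (∀ (x : C ⊗[ℂ] A) (a : A) (m m' : ℕ) (a1 a2 a3 : Fin m → A)
        (x0 : Fin m' → C ⊗[ℂ] A) (x1 : Fin m' → A),
      x ∈ IndSub A B C π γ →
      (TensorProduct.map (Coalgebra.comul (R := ℂ)) LinearMap.id)
          (Coalgebra.comul (R := ℂ) a) = ∑ i, (a1 i ⊗ₜ a2 i) ⊗ₜ a3 i →
      (TensorProduct.assoc ℂ C A A).symm
          ((TensorProduct.map LinearMap.id (Coalgebra.comul (R := ℂ))) x) =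
        ∑ j, x0 j ⊗ₜ x1 j →
      (TensorProduct.assoc ℂ C A A).symm
          ((TensorProduct.map LinearMap.id (Coalgebra.comul (R := ℂ)))
            (actInd A B C π actC x a)) =
        ∑ i, ∑ j, (actInd A B C π actC (x0 j) (a2 i)) ⊗ₜ
          (HopfAlgebra.antipode (R := ℂ) (a1 i) * x1 j * a3 i)) ∧
    -- braided commutativity is inherited:
    ((∀ (c c' : C) (m' : ℕ) (c0 : Fin m' → C) (c1 : Fin m' → B),
        γ c' = ∑ j, c0 j ⊗ₜ c1 j → c * c' = ∑ j, c0 j * actC c (c1 j)) →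
      ∀ (x y : C ⊗[ℂ] A) (m' : ℕ) (y0 : Fin m' → C ⊗[ℂ] A) (y1 : Fin m' → A),
        x ∈ IndSub A B C π γ → y ∈ IndSub A B C π γ →
        (TensorProduct.assoc ℂ C A A).symm
            ((TensorProduct.map LinearMap.id (Coalgebra.comul (R := ℂ))) y) =
          ∑ j, y0 j ⊗ₜ y1 j →
        x * y = ∑ j, y0 j * actInd A B C π actC x (y1 j)) := by
  obtain ⟨p, rfl⟩ : ∃ p : A →ₐc[ℂ] B, (p : A →ₐ[ℂ] B) = π :=
    ⟨.ofAlgHom π (AlgHom.ext hπcounit) (AlgHom.ext fun a => (hπcomul a).symm), rfl⟩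
  obtain ⟨hind, hmod, hYD', hbraided⟩ := induced_yetter_drinfeld_general p γ actC
    (isModuleAlgebra_iff_sum.2 ⟨hact_mul, hact_one, hact_prod, hact_unit⟩)
    ((isYetterDrinfeld_iff_sum actC γ).2 hYD)
  obtain ⟨hmul, hone, hprod, hunit⟩ := isModuleAlgebra_iff_sum.1 hmod
  simp only [actInd_eq_inducedAction, mem_IndSub_iff]
  refine ⟨hind, hmul, hone, hprod, hunit, fun x a m n a₁ a₂ a₃ x₀ x₁ _ ha hx => ?_,
    fun hcomm x y n y₀ y₁ _ hy hdec => ?_⟩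
  · exact (isYetterDrinfeld_iff_sum _ _).1 hYD' x a m n a₁ a₂ a₃ x₀ x₁ ha hx
  · refine (hbraided (fun c c' => ?_) x y hy).trans (braidedMul_eq_sum _ hdec x)
    obtain ⟨n, c₀, c₁, hc⟩ := TensorProduct.exists_sum_tmul_eq (γ c')
    exact (hcomm c c' n c₀ c₁ hc).trans (braidedMul_eq_sum _ hc c).symm

end
end
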